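/- arXiv:2505.14817 — 5 statements merged into one kernel-verified Lean document; each statement's English description precedes it below -/
import Mathlib

section
/- Let ℓ^1,…,ℓ^N : ℝ^n → ℝ be differentiable functions and for each i let x*ⁱ be a global minimizer of ℓ^i over ℝ^n. If a point x† ∈ ℝ^n satisfies h(x†) = 0, where h is the DiBS vector field, then x† is Pareto stationary for ℓ^1,…,ℓ^N; equivalently, every fixed point of the DiBS update map x ↦ x − α·h(x) (for any fixed step size α > 0) is Pareto stationary. -/
open scoped RealInnerProductSpace BigOperators Classical

/-- The DiBS vector field: `h(x) = ∑ i, ‖x − x*ⁱ‖ · ∇ℓⁱ(x)/‖∇ℓⁱ(x)‖`,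
with the `i`-th summand taken to be `0` whenever `∇ℓⁱ(x) = 0`. -/
noncomputable def dibsField {n N : ℕ} (ℓ : Fin N → EuclideanSpace ℝ (Fin n) → ℝ)
    (xstar : Fin N → EuclideanSpace ℝ (Fin n)) (x : EuclideanSpace ℝ (Fin n)) :
    EuclideanSpace ℝ (Fin n) :=
  ∑ i, if gradient (ℓ i) x ≠ 0 then
    (‖x - xstar i‖ / ‖gradient (ℓ i) x‖) • gradient (ℓ i) x else 0

/-- `x` is Pareto stationary for the costs `ℓ¹, …, ℓᴺ`. -/
def ParetoStationary {n N : ℕ} (ℓ : Fin N → EuclideanSpace ℝ (Fin n) → ℝ)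
    (x : EuclideanSpace ℝ (Fin n)) : Prop :=
  ∃ β : Fin N → ℝ, (∀ i, 0 ≤ β i) ∧ (∑ i, β i) = 1 ∧ (∑ i, β i • gradient (ℓ i) x) = 0

theorem dibs_zero_implies_pareto_stationary {n N : ℕ} (hN : 0 < N)
    (ℓ : Fin N → EuclideanSpace ℝ (Fin n) → ℝ)
    (xstar : Fin N → EuclideanSpace ℝ (Fin n))
    (hdiff : ∀ i, Differentiable ℝ (ℓ i))
    (hmin : ∀ i, ∀ y, ℓ i (xstar i) ≤ ℓ i y)
    (xdag : EuclideanSpace ℝ (Fin n)) :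
    (dibsField ℓ xstar xdag = 0 → ParetoStationary ℓ xdag) ∧
    (∀ α : ℝ, 0 < α → xdag - α • dibsField ℓ xstar xdag = xdag →
      ParetoStationary ℓ xdag) := by
  have main : dibsField ℓ xstar xdag = 0 → ParetoStationary ℓ xdag := by
    intro h
    by_cases hz : ∃ i, gradient (ℓ i) xdag = 0
    · obtain ⟨i, hi⟩ := hz
      refine ⟨fun j => if j = i then 1 else 0, ?_, ?_, ?_⟩
      · intro j
        dsimp only
        split_ifs <;> norm_num
      · simp
      · simp [hi]
    · have hz' : ∀ i, gradient (ℓ i) xdag ≠ 0 := fun i hi => hz ⟨i, hi⟩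
      have hpos : ∀ i, 0 < ‖xdag - xstar i‖ / ‖gradient (ℓ i) xdag‖ := by
        intro i
        refine div_pos (norm_pos_iff.2 ?_) (norm_pos_iff.2 (hz' i))
        intro he
        rw [sub_eq_zero] at he
        apply hz' i
        have hm : IsLocalMin (ℓ i) (xstar i) := Filter.Eventually.of_forall (hmin i)
        rw [he, gradient, hm.fderiv_eq_zero, map_zero]
      have h' : ∑ i, (‖xdag - xstar i‖ / ‖gradient (ℓ i) xdag‖) • gradient (ℓ i) xdag = 0 := by
        rw [← h, dibsField]
        exact Finset.sum_congr rfl fun i _ => (if_pos (hz' i)).symm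
      have hS : 0 < ∑ i, ‖xdag - xstar i‖ / ‖gradient (ℓ i) xdag‖ :=
        Finset.sum_pos (fun i _ => hpos i) ⟨⟨0, hN⟩, Finset.mem_univ _⟩
      generalize hc : (fun i => ‖xdag - xstar i‖ / ‖gradient (ℓ i) xdag‖) = c at *
      have hc' : ∀ i, ‖xdag - xstar i‖ / ‖gradient (ℓ i) xdag‖ = c i := fun i => congrFun hc i
      simp only [hc'] at h' hS hpos
      refine ⟨fun i => (∑ j, c j)⁻¹ * c i, ?_, ?_, ?_⟩
      · intro i
        exact mul_nonneg (inv_nonneg.2 hS.le) (hpos i).le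
      · rw [← Finset.mul_sum, inv_mul_cancel₀ hS.ne']
      · simp only [mul_smul]
        rw [← Finset.smul_sum, h', smul_zero]
  refine ⟨main, fun α hα h => main ?_⟩
  rw [sub_eq_self, smul_eq_zero] at h
  exact h.resolve_left hα.ne'
end

section
/- (Gordan's alternative) Let v_1,…,v_N be vectors in ℝ^n. Then there exists d ∈ ℝ^n with ⟨v_i, d⟩ < 0 for every i ∈ {1,…,N} if and only if the zero vector does not lie in the convex hull of {v_1,…,v_N}. -/
open scoped RealInnerProductSpace BigOperators

/-- Gordan's theorem of the alternative. -/
theorem gordan_alternative {n N : ℕ} (v : Fin N → EuclideanSpace ℝ (Fin n)) :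
    (∃ d : EuclideanSpace ℝ (Fin n), ∀ i, ⟪v i, d⟫ < 0) ↔
      (0 : EuclideanSpace ℝ (Fin n)) ∉ convexHull ℝ (Set.range v) := by
  constructor
  · rintro ⟨d, hd⟩ h0
    have hc : Convex ℝ {x : EuclideanSpace ℝ (Fin n) | innerSL ℝ d x < 0} :=
      convex_halfSpace_lt (innerSL ℝ d).toLinearMap.isLinear 0
    have hs : Set.range v ⊆ {x : EuclideanSpace ℝ (Fin n) | innerSL ℝ d x < 0} := by
      rintro _ ⟨i, rfl⟩
      have := hd i
      rw [real_inner_comm] at this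
      simpa using this
    have h := convexHull_min hs hc h0
    simp at h
  · intro h0
    obtain ⟨f, u, hf, hu⟩ := geometric_hahn_banach_closed_point (convex_convexHull ℝ (Set.range v))
      ((Set.finite_range v).isClosed_convexHull ℝ) h0
    refine ⟨(InnerProductSpace.toDual ℝ _).symm f, fun i => ?_⟩
    rw [real_inner_comm, InnerProductSpace.toDual_symm_apply]
    have h1 := hf (v i) (subset_convexHull ℝ _ ⟨i, rfl⟩)
    rw [map_zero] at hu
    linarith
end

section
/- Let ℓ : ℝ^n → ℝ be differentiable, μ-strongly convex (μ > 0), and L-smooth, with global minimizer x*. Define h₁ : ℝ^n → ℝ^n by h₁(x) = ‖x − x*‖·∇ℓ(x)/‖∇ℓ(x)‖ for x ≠ x* and h₁(x*) = 0. Then h₁ is Lipschitz continuous with constant 1 + 2L/μ: for all x, y ∈ ℝ^n, ‖h₁(x) − h₁(y)‖ ≤ (1 + 2L/μ)·‖x − y‖. -/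
open scoped RealInnerProductSpace Classical

/-- The single-agent DiBS term `h₁(x) = ‖x − x*‖·∇ℓ(x)/‖∇ℓ(x)‖` for `x ≠ x*`,
and `h₁(x*) = 0`. -/
noncomputable def dibsTerm {n : ℕ} (ℓ : EuclideanSpace ℝ (Fin n) → ℝ)
    (xstar : EuclideanSpace ℝ (Fin n)) (x : EuclideanSpace ℝ (Fin n)) :
    EuclideanSpace ℝ (Fin n) :=
  if x = xstar then 0 else (‖x - xstar‖ / ‖gradient ℓ x‖) • gradient ℓ x

theorem dibs_grad_lower {n : ℕ}
    (ℓ : EuclideanSpace ℝ (Fin n) → ℝ) (μ : ℝ)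
    (hdiff : Differentiable ℝ ℓ)
    (hsc : ConvexOn ℝ Set.univ (fun x => ℓ x - μ / 2 * ‖x‖ ^ 2))
    (xstar : EuclideanSpace ℝ (Fin n))
    (hmin : ∀ y, ℓ xstar ≤ ℓ y) (x : EuclideanSpace ℝ (Fin n)) :
    μ * ‖x - xstar‖ ≤ ‖gradient ℓ x‖ := by
  set v := x - xstar with hv
  have hg0 : gradient ℓ xstar = 0 := by
    have h : fderiv ℝ ℓ xstar = 0 :=
      IsLocalMin.fderiv_eq_zero (Filter.Eventually.of_forall hmin)
    simp [gradient, h]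
  have hline : ∀ t : ℝ, HasDerivAt (fun t : ℝ => xstar + t • v) v t := fun t => by
    simpa using ((hasDerivAt_id t).smul_const v).const_add xstar
  have hder : ∀ t : ℝ, HasDerivAt
      (fun t : ℝ => ℓ (xstar + t • v) - μ / 2 * ‖xstar + t • v‖ ^ 2)
      (⟪gradient ℓ (xstar + t • v), v⟫ - μ / 2 * (2 * ⟪xstar + t • v, v⟫)) t := fun t => by
    have h1 := ((hdiff (xstar + t • v)).hasGradientAt.hasFDerivAt).comp_hasDerivAt t (hline t)
    have h2 := ((hline t).norm_sq).const_mul (μ / 2)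
    exact h1.sub h2
  have hconv : ConvexOn ℝ Set.univ
      (fun t : ℝ => ℓ (xstar + t • v) - μ / 2 * ‖xstar + t • v‖ ^ 2) := by
    have := hsc.comp_affineMap (AffineMap.lineMap xstar x : ℝ →ᵃ[ℝ] _)
    refine (by simpa using this : ConvexOn ℝ Set.univ _).congr ?_
    intro t _
    simp [AffineMap.lineMap_apply, hv, add_comm]
  have a0 := hconv.le_slope_of_hasDerivAt (Set.mem_univ 0) (Set.mem_univ 1) one_pos (hder 0)
  have a1 := hconv.slope_le_of_hasDerivAt (Set.mem_univ 0) (Set.mem_univ 1) one_pos (hder 1)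
  have a := a0.trans a1
  have hx : xstar + (1:ℝ) • v = x := by simp [hv]
  rw [hx] at a
  simp only [zero_smul, add_zero, hg0, inner_zero_left] at a
  have e : ⟪x, v⟫ = ⟪xstar, v⟫ + ‖v‖ ^ 2 := by
    rw [← real_inner_self_eq_norm_sq, ← inner_add_left, hv]; simp
  have c := real_inner_le_norm (gradient ℓ x) v
  rw [e] at a
  rcases (norm_nonneg v).eq_or_lt with h | h
  · rw [← h]; simp
  · refine le_of_mul_le_mul_right ?_ h
    nlinarith

theorem dibs_term_lipschitz {n : ℕ}
    (ℓ : EuclideanSpace ℝ (Fin n) → ℝ) (μ L : ℝ) (hμ : 0 < μ)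
    (hdiff : Differentiable ℝ ℓ)
    (hsc : ConvexOn ℝ Set.univ (fun x => ℓ x - μ / 2 * ‖x‖ ^ 2))
    (hsmooth : ∀ x y, ‖gradient ℓ x - gradient ℓ y‖ ≤ L * ‖x - y‖)
    (xstar : EuclideanSpace ℝ (Fin n))
    (hmin : ∀ y, ℓ xstar ≤ ℓ y) :
    ∀ x y : EuclideanSpace ℝ (Fin n),
      ‖dibsTerm ℓ xstar x - dibsTerm ℓ xstar y‖ ≤ (1 + 2 * L / μ) * ‖x - y‖ := by
  intro x y
  rcases eq_or_ne x y with rfl | hxy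
  · simp
  have hd : 0 < ‖x - y‖ := norm_pos_iff.2 (sub_ne_zero.2 hxy)
  have hL : 0 ≤ L := by
    by_contra! h
    have := (norm_nonneg _).trans (hsmooth x y)
    nlinarith
  have hlow := dibs_grad_lower ℓ μ hdiff hsc xstar hmin
  have hK : 0 ≤ 2 * L / μ := by positivity
  have hbd : ∀ z, ‖dibsTerm ℓ xstar z‖ ≤ ‖z - xstar‖ := fun z => by
    unfold dibsTerm
    split_ifs with hz
    · simp
    · rw [norm_smul, norm_div, norm_norm, norm_norm]
      rw [div_mul_eq_mul_div]
      exact div_le_of_le_mul₀ (norm_nonneg _) (norm_nonneg _) le_rfl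
  by_cases hx : x = xstar
  · have h0 : dibsTerm ℓ xstar x = 0 := by simp [dibsTerm, hx]
    rw [h0, zero_sub, norm_neg]
    have := hbd y
    rw [← hx, norm_sub_rev y x] at this
    rw [← hx]
    nlinarith [mul_nonneg hK hd.le]
  by_cases hy : y = xstar
  · have h0 : dibsTerm ℓ xstar y = 0 := by simp [dibsTerm, hy]
    rw [h0, sub_zero]
    have := hbd x
    rw [← hy] at this
    rw [← hy]
    nlinarith [mul_nonneg hK hd.le]
  have hr : 0 < ‖x - xstar‖ := norm_pos_iff.2 (sub_ne_zero.2 hx)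
  have hs : 0 < ‖y - xstar‖ := norm_pos_iff.2 (sub_ne_zero.2 hy)
  have ha : 0 < ‖gradient ℓ x‖ := lt_of_lt_of_le (by positivity) (hlow x)
  have hb : 0 < ‖gradient ℓ y‖ := lt_of_lt_of_le (by positivity) (hlow y)
  have hab := hsmooth x y
  have hq : ‖x - xstar‖ / ‖gradient ℓ x‖ ≤ 1 / μ := by
    rw [div_le_div_iff₀ ha hμ]; linarith [hlow x]
  have hrs : |‖x - xstar‖ - ‖y - xstar‖| ≤ ‖x - y‖ := by
    simpa using abs_norm_sub_norm_le (x - xstar) (y - xstar)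
  have hba : |‖gradient ℓ y‖ - ‖gradient ℓ x‖| ≤ L * ‖x - y‖ := by
    rw [abs_sub_comm]; exact (abs_norm_sub_norm_le _ _).trans hab
  simp only [dibsTerm, if_neg hx, if_neg hy]
  generalize gradient ℓ x = a at *
  generalize gradient ℓ y = b at *
  generalize ‖x - xstar‖ = r at *
  generalize ‖y - xstar‖ = s at *
  have hu : ‖(‖b‖⁻¹ • b)‖ = 1 := by
    rw [norm_smul, norm_inv, norm_norm, inv_mul_cancel₀ hb.ne']
  have key : (r / ‖a‖) • a - (s / ‖b‖) • b = (r - s) • (‖b‖⁻¹ • b) +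
      (r / ‖a‖) • ((a - b) + (‖b‖ - ‖a‖) • (‖b‖⁻¹ • b)) := by
    match_scalars <;> field_simp <;> ring
  rw [key]
  have h1 : ‖(r - s) • (‖b‖⁻¹ • b)‖ ≤ ‖x - y‖ := by
    rw [norm_smul, hu, mul_one]; exact hrs
  have h2 : ‖(a - b) + (‖b‖ - ‖a‖) • (‖b‖⁻¹ • b)‖ ≤ 2 * (L * ‖x - y‖) := by
    refine (norm_add_le _ _).trans ?_
    rw [norm_smul, hu, mul_one, Real.norm_eq_abs]; linarith
  have h3 : ‖(r / ‖a‖) • ((a - b) + (‖b‖ - ‖a‖) • (‖b‖⁻¹ • b))‖ ≤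
      1 / μ * (2 * (L * ‖x - y‖)) := by
    rw [norm_smul, Real.norm_of_nonneg (by positivity)]
    exact mul_le_mul hq h2 (norm_nonneg _) (by positivity)
  refine (norm_add_le _ _).trans ((add_le_add h1 h3).trans (le_of_eq ?_))
  field_simp
end

section
/- (Boundedness: the DiBS field points outward far from the minimizers) Let ℓ^1,…,ℓ^N : ℝ^n → ℝ be differentiable, with ℓ^i μᵢ-strongly convex (μᵢ > 0) and Lᵢ-smooth, and let x*ⁱ be the global minimizer of ℓ^i. Fix c ∈ ℝ^n and set R = max_{1≤i≤N} ‖x*ⁱ − c‖ and κ = max_{1≤i≤N} Lᵢ/μᵢ. Then for every x ∈ ℝ^n with ‖x − c‖ > (1 + κ)·R and x ≠ c, the DiBS vector field satisfies ⟨h(x), x − c⟩ > 0; consequently the continuous-time DiBS dynamics ẋ = −h(x) cannot leave the closed ball of radius (1 + κ)·R + ε around c once inside it, for any ε > 0. -/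
open scoped RealInnerProductSpace BigOperators Classical

theorem dibs_aux_sc {E : Type*} [NormedAddCommGroup E] [InnerProductSpace ℝ E] [CompleteSpace E]
    (f : E → ℝ) (m : ℝ) (hd : Differentiable ℝ f)
    (hsc : ConvexOn ℝ Set.univ (fun x => f x - m / 2 * ‖x‖ ^ 2)) (a x : E)
    (hmin : ∀ y, f a ≤ f y) :
    gradient f a = 0 ∧ m * ‖x - a‖ ^ 2 ≤ ⟪gradient f x, x - a⟫ := by
  have hg0 : gradient f a = 0 := by
    have h : fderiv ℝ f a = 0 :=
      IsLocalMin.fderiv_eq_zero (Filter.Eventually.of_forall hmin)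
    simp [gradient, h]
  refine ⟨hg0, ?_⟩
  set e := x - a with he
  have hline : ∀ t : ℝ, HasDerivAt (fun s : ℝ => a + s • e) e t := by
    intro t
    simpa using ((hasDerivAt_id t).smul_const e).const_add a
  have hder : ∀ t : ℝ, HasDerivAt (fun s : ℝ => f (a + s • e) - m / 2 * ‖a + s • e‖ ^ 2)
      (⟪gradient f (a + t • e), e⟫ - m / 2 * (2 * ⟪a + t • e, e⟫)) t := by
    intro t
    have h1 := (hd (a + t • e)).hasGradientAt.hasFDerivAt.comp_hasDerivAt t (hline t)
    have h2 := ((hline t).norm_sq).const_mul (m / 2)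
    have h3 := h1.sub h2
    rw [InnerProductSpace.toDual_apply_apply] at h3
    exact h3
  have hc : ConvexOn ℝ Set.univ (fun s : ℝ => f (a + s • e) - m / 2 * ‖a + s • e‖ ^ 2) := by
    refine ⟨convex_univ, ?_⟩
    intro s _ t _ p q hp hq hpq
    have := hsc.2 (Set.mem_univ (a + s • e)) (Set.mem_univ (a + t • e)) hp hq hpq
    have h3 : p • (a + s • e) + q • (a + t • e) = a + (p • s + q • t) • e := by
      have : a = (p + q) • a := by rw [hpq, one_smul]
      conv_rhs => rw [this]
      simp only [smul_eq_mul]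
      module
    rw [h3] at this
    exact this
  have k0 := hc.le_slope_of_hasDerivAt (Set.mem_univ (0:ℝ)) (Set.mem_univ (1:ℝ)) one_pos (hder 0)
  have k1 := hc.slope_le_of_hasDerivAt (Set.mem_univ (0:ℝ)) (Set.mem_univ (1:ℝ)) one_pos (hder 1)
  have k := k0.trans k1
  have hx : a + (1:ℝ) • e = x := by simp [he]
  rw [hx] at k
  simp only [zero_smul, add_zero, hg0, inner_zero_left] at k
  have h5 : ‖e‖ ^ 2 = ⟪x, e⟫ - ⟪a, e⟫ := by
    rw [← inner_sub_left, ← he, real_inner_self_eq_norm_sq]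
  rw [h5]
  linarith

theorem dibs_field_points_outward_far_from_minimizers {n N : ℕ} (hN : 0 < N)
    (ℓ : Fin N → EuclideanSpace ℝ (Fin n) → ℝ) (μ L : Fin N → ℝ)
    (hμ : ∀ i, 0 < μ i)
    (hdiff : ∀ i, Differentiable ℝ (ℓ i))
    (hsc : ∀ i, ConvexOn ℝ Set.univ (fun x => ℓ i x - μ i / 2 * ‖x‖ ^ 2))
    (hsmooth : ∀ i, ∀ x y, ‖gradient (ℓ i) x - gradient (ℓ i) y‖ ≤ L i * ‖x - y‖)
    (xstar : Fin N → EuclideanSpace ℝ (Fin n))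
    (hmin : ∀ i, ∀ y, ℓ i (xstar i) ≤ ℓ i y)
    (c : EuclideanSpace ℝ (Fin n)) (R κ : ℝ)
    (hR : R = ⨆ i, ‖xstar i - c‖)
    (hκ : κ = ⨆ i, L i / μ i) :
    (∀ x : EuclideanSpace ℝ (Fin n), (1 + κ) * R < ‖x - c‖ → x ≠ c →
      0 < ⟪dibsField ℓ xstar x, x - c⟫) ∧
    (∀ ε : ℝ, 0 < ε → ∀ φ : ℝ → EuclideanSpace ℝ (Fin n),
      (∀ t : ℝ, HasDerivAt φ (-(dibsField ℓ xstar (φ t))) t) →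
      ∀ t₀ t : ℝ, t₀ ≤ t → ‖φ t₀ - c‖ ≤ (1 + κ) * R + ε →
        ‖φ t - c‖ ≤ (1 + κ) * R + ε) := by
  have key : ∀ i x, gradient (ℓ i) (xstar i) = 0 ∧
      μ i * ‖x - xstar i‖ ^ 2 ≤ ⟪gradient (ℓ i) x, x - xstar i⟫ := fun i x =>
    dibs_aux_sc (ℓ i) (μ i) (hdiff i) (hsc i) (xstar i) x (hmin i)
  have hgL : ∀ i x, ‖gradient (ℓ i) x‖ ≤ L i * ‖x - xstar i‖ := by
    intro i x
    have := hsmooth i x (xstar i)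
    rwa [(key i x).1, sub_zero] at this
  have hRi : ∀ i, ‖xstar i - c‖ ≤ R := fun i => by
    rw [hR]; exact le_ciSup (f := fun i => ‖xstar i - c‖) (Set.finite_range _).bddAbove i
  have hκi : ∀ i, L i / μ i ≤ κ := fun i => by
    rw [hκ]; exact le_ciSup (f := fun i => L i / μ i) (Set.finite_range _).bddAbove i
  have hR0 : 0 ≤ R := (norm_nonneg _).trans (hRi ⟨0, hN⟩)
  have hLμ : ∀ v : EuclideanSpace ℝ (Fin n), v ≠ 0 → ∀ i, μ i ≤ L i := by
    intro v hv i
    have h1 := (key i (xstar i + v)).2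
    have h2 := hgL i (xstar i + v)
    have h3 := real_inner_le_norm (gradient (ℓ i) (xstar i + v)) v
    rw [add_sub_cancel_left] at h1 h2
    have hv' : 0 < ‖v‖ := norm_pos_iff.mpr hv
    have h4 : μ i * ‖v‖ ^ 2 ≤ L i * ‖v‖ ^ 2 := by
      nlinarith [mul_le_mul_of_nonneg_right h2 hv'.le]
    exact le_of_mul_le_mul_right h4 (by positivity)
  have hκ1 : ∀ v : EuclideanSpace ℝ (Fin n), v ≠ 0 → 1 ≤ κ := fun v hv =>
    ((one_le_div (hμ ⟨0, hN⟩)).mpr (hLμ v hv _)).trans (hκi ⟨0, hN⟩)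
  have main : ∀ x : EuclideanSpace ℝ (Fin n), (1 + κ) * R < ‖x - c‖ → x ≠ c →
      0 < ⟪dibsField ℓ xstar x, x - c⟫ := by
    intro x hx hxc
    have hv : x - c ≠ 0 := sub_ne_zero.mpr hxc
    have hk := hκ1 _ hv
    unfold dibsField
    rw [sum_inner]
    refine Finset.sum_pos ?_ ⟨⟨0, hN⟩, Finset.mem_univ _⟩
    intro i _
    have htri : ‖x - c‖ ≤ ‖x - xstar i‖ + ‖xstar i - c‖ := norm_sub_le_norm_sub_add_norm_sub _ _ _
    have he : κ * R < ‖x - xstar i‖ := by linarith [hRi i]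
    have he0 : 0 < ‖x - xstar i‖ := lt_of_le_of_lt (by positivity) he
    have h1 := (key i x).2
    have h2 := hgL i x
    have hg : gradient (ℓ i) x ≠ 0 := by
      intro h
      rw [h, inner_zero_left] at h1
      have := mul_pos (hμ i) (pow_pos he0 2)
      linarith
    rw [if_pos hg, real_inner_smul_left]
    have hg0 : 0 < ‖gradient (ℓ i) x‖ := norm_pos_iff.mpr hg
    refine mul_pos (div_pos he0 hg0) ?_
    have h3 : x - c = (x - xstar i) + (xstar i - c) := by abel
    rw [h3, inner_add_right]
    have h4 := neg_le_of_abs_le (abs_real_inner_le_norm (gradient (ℓ i) x) (xstar i - c))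
    have h5 : ‖gradient (ℓ i) x‖ * ‖xstar i - c‖ ≤ L i * ‖x - xstar i‖ * R :=
      mul_le_mul h2 (hRi i) (norm_nonneg _) (hg0.le.trans h2)
    have h6 : L i ≤ κ * μ i := (div_le_iff₀ (hμ i)).mp (hκi i)
    have h7 : L i * R < μ i * ‖x - xstar i‖ := by
      nlinarith [mul_le_mul_of_nonneg_right h6 hR0, mul_lt_mul_of_pos_left he (hμ i)]
    nlinarith [mul_lt_mul_of_pos_right h7 he0]
  refine ⟨main, ?_⟩
  intro ε hε φ hφ t₀ t ht h0
  by_cases hs : ∃ v : EuclideanSpace ℝ (Fin n), v ≠ 0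
  · obtain ⟨v, hv⟩ := hs
    have hk := hκ1 v hv
    have hr : 0 < (1 + κ) * R + ε := by positivity
    set r := (1 + κ) * R + ε with hrdef
    have hd : ∀ s, HasDerivAt (fun s => ‖φ s - c‖ ^ 2)
        (2 * ⟪φ s - c, -(dibsField ℓ xstar (φ s))⟫) s := fun s =>
      ((hφ s).sub_const c).norm_sq
    have hb := image_le_of_deriv_right_lt_deriv_boundary (a := t₀) (b := t)
      (f := fun s => ‖φ s - c‖ ^ 2) (B := fun _ => r ^ 2) (B' := fun _ => 0)
      (fun s _ => (hd s).continuousAt.continuousWithinAt)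
      (fun s _ => (hd s).hasDerivWithinAt)
      (pow_le_pow_left₀ (norm_nonneg _) h0 2)
      (fun s => hasDerivAt_const s _)
      (by
        intro s _ hs
        have hs' : ‖φ s - c‖ = r := (pow_left_inj₀ (norm_nonneg _) hr.le two_ne_zero).mp hs
        have hne : φ s ≠ c := by
          intro h
          rw [h, sub_self, norm_zero] at hs'
          linarith
        have := main (φ s) (by rw [hs']; linarith) hne
        rw [inner_neg_right, real_inner_comm]
        linarith)
      (Set.right_mem_Icc.mpr ht)
    exact (pow_le_pow_iff_left₀ (norm_nonneg _) hr.le two_ne_zero).mp hb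
  · push Not at hs
    rw [hs (φ t - c)]
    rwa [hs (φ t₀ - c)] at h0
end

section
/- (Existence of a DiBS fixed point) Let ℓ^1,…,ℓ^N : ℝ^n → ℝ be differentiable, with ℓ^i μᵢ-strongly convex (μᵢ > 0) and Lᵢ-smooth, and let x*ⁱ be the global minimizer of ℓ^i. Then there exists x† ∈ ℝ^n with h(x†) = 0, where h is the DiBS vector field; equivalently, for every step size α > 0 the DiBS update map x ↦ x − α·h(x) has a fixed point, which is moreover Pareto stationary for ℓ^1,…,ℓ^N. -/
open scoped RealInnerProductSpace BigOperators Classical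

open MeasureTheory Metric

theorem det_poly {n : ℕ} (A : EuclideanSpace ℝ (Fin n) →L[ℝ] EuclideanSpace ℝ (Fin n)) :
    ∃ p : Polynomial ℝ, p.natDegree ≤ n ∧ ∀ t : ℝ,
      p.eval t = (ContinuousLinearMap.id ℝ _ + t • A).det := by
  let b := (EuclideanSpace.basisFun (Fin n) ℝ).toBasis
  let M := LinearMap.toMatrix b b (A : _ →ₗ[ℝ] _)
  refine ⟨((Polynomial.X : Polynomial ℝ) • M.map Polynomial.C + (1 : Matrix (Fin n) (Fin n) ℝ).map Polynomial.C).det, ?_, ?_⟩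
  · simpa using Polynomial.natDegree_det_X_add_C_le M 1
  · intro t
    rw [ContinuousLinearMap.det, ← LinearMap.det_toMatrix b, ← Polynomial.coe_evalRingHom, RingHom.map_det]
    congr 1
    have : (↑(ContinuousLinearMap.id ℝ (EuclideanSpace ℝ (Fin n)) + t • A) : EuclideanSpace ℝ (Fin n) →ₗ[ℝ] _)
      = LinearMap.id + t • (A : EuclideanSpace ℝ (Fin n) →ₗ[ℝ] _) := by ext; simp
    rw [this, (LinearMap.toMatrix b b).map_add, (LinearMap.toMatrix b b).map_smul, LinearMap.toMatrix_id]
    ext i j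
    simp only [RingHom.mapMatrix_apply, Matrix.map_apply, Matrix.add_apply, Matrix.smul_apply, M]
    
    by_cases h : i = j <;> simp [h] <;> ring

theorem det_ne_zero_aux {E : Type*} [NormedAddCommGroup E] [InnerProductSpace ℝ E] [FiniteDimensional ℝ E]
    (A : E →L[ℝ] E) {C t : ℝ} (hA : ‖A‖ ≤ C) (ht : 0 ≤ t) (htC : t * C < 1) :
    (ContinuousLinearMap.id ℝ E + t • A).det ≠ 0 := by
  intro h
  have := LinearMap.bot_lt_ker_of_det_eq_zero h
  obtain ⟨v, hv, hv0⟩ := (Submodule.ne_bot_iff _).1 this.ne'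
  have h1 : v + t • A v = 0 := by simpa using hv
  have h2 : ‖v‖ = t * ‖A v‖ := by
    rw [eq_neg_of_add_eq_zero_left h1, norm_neg, norm_smul, Real.norm_of_nonneg ht]
    congr 2
    rw [← eq_neg_of_add_eq_zero_left h1]
  have h3 := A.le_opNorm v
  have h4 : 0 < ‖v‖ := norm_pos_iff.2 hv0
  have h5 : ‖A v‖ ≤ C * ‖v‖ := h3.trans (by gcongr)
  have : t * ‖A v‖ ≤ t * (C * ‖v‖) := by gcongr
  nlinarith

theorem det_pos_aux {E : Type*} [NormedAddCommGroup E] [InnerProductSpace ℝ E] [FiniteDimensional ℝ E]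
    (A : E →L[ℝ] E) {C t : ℝ} (hA : ‖A‖ ≤ C) (ht : 0 ≤ t) (htC : t * C < 1) :
    0 < (ContinuousLinearMap.id ℝ E + t • A).det := by
  by_contra hneg
  push Not at hneg
  have hC : 0 ≤ C := (norm_nonneg A).trans hA
  have hc : ContinuousOn (fun s : ℝ => (ContinuousLinearMap.id ℝ E + s • A).det) (Set.Icc 0 t) := by
    apply Continuous.continuousOn
    exact ContinuousLinearMap.continuous_det.comp (by fun_prop)
  have h0 : (ContinuousLinearMap.id ℝ E + (0:ℝ) • A).det = 1 := by
    rw [zero_smul, add_zero, ContinuousLinearMap.det]; simp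
  have := intermediate_value_Icc' ht hc (show (0:ℝ) ∈ _ from ⟨hneg, by simp only [h0]; norm_num⟩)
  obtain ⟨s, hs, hs0⟩ := this
  refine det_ne_zero_aux A hA hs.1 (lt_of_le_of_lt ?_ htC) hs0
  exact mul_le_mul_of_nonneg_right hs.2 hC

abbrev EN (n : ℕ) := EuclideanSpace ℝ (Fin n)

theorem range_top_aux {E : Type*} [NormedAddCommGroup E] [InnerProductSpace ℝ E] [FiniteDimensional ℝ E]
    (A : E →L[ℝ] E) (h : A.det ≠ 0) : (A : E →ₗ[ℝ] E).range = ⊤ := by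
  rw [LinearMap.range_eq_top]
  have := (A.toContinuousLinearEquivOfDetNeZero h).surjective
  intro y
  obtain ⟨x, hx⟩ := this y
  exact ⟨x, by simpa using hx⟩

theorem no_retraction {n : ℕ} (f : EN n → EN n)
    (hf : ∀ x, ‖x‖ ≤ 1 → ContDiffAt ℝ 1 f x) (h1 : ∀ x, ‖x‖ ≤ 1 → ‖f x‖ = 1)
    (hid : ∀ x, ‖x‖ = 1 → f x = x) : False := by
  let A : (EN n) → (EN n) →L[ℝ] (EN n) := fun x => fderiv ℝ f x - ContinuousLinearMap.id ℝ (EN n)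
  have hAc : ContinuousOn A (closedBall 0 1) := by
    intro x hx
    have := ((hf x (by simpa using hx)).continuousAt_fderiv (by norm_num)).continuousWithinAt (s := closedBall 0 1)
    exact this.sub continuousWithinAt_const
  obtain ⟨C, hC⟩ := (isCompact_closedBall (0:(EN n)) 1).exists_bound_of_continuousOn hAc
  have hC0 : 0 ≤ C := (norm_nonneg _).trans (hC 0 (by simp))
  have hfd : ∀ x ∈ closedBall (0:(EN n)) 1, HasFDerivAt f (fderiv ℝ f x) x := fun x hx =>
    ((hf x (by simpa using hx)).differentiableAt (by norm_num)).hasFDerivAt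
  have hgd : ∀ x ∈ closedBall (0:(EN n)) 1, HasFDerivAt (fun y => f y - y) (A x) x := fun x hx =>
    (hfd x hx).sub (hasFDerivAt_id x)
  have hlip : ∀ x ∈ closedBall (0:(EN n)) 1, ∀ y ∈ closedBall (0:(EN n)) 1,
      ‖(f y - y) - (f x - x)‖ ≤ C * ‖y - x‖ := fun x hx y hy =>
    Convex.norm_image_sub_le_of_norm_hasFDerivWithin_le (f := fun y => f y - y) 
      (fun z hz => (hgd z hz).hasFDerivWithinAt) hC (convex_closedBall 0 1) hx hy
  have hdetc : ∀ t : ℝ, ContinuousOn (fun x => (ContinuousLinearMap.id ℝ (EN n) + t • A x).det) (closedBall 0 1) := by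
    intro t
    exact ContinuousLinearMap.continuous_det.comp_continuousOn 
      (continuousOn_const.add (hAc.const_smul t))
  have hint : ∀ t : ℝ, IntegrableOn (fun x => (ContinuousLinearMap.id ℝ (EN n) + t • A x).det) (ball (0:(EN n)) 1) :=
    fun t => ((hdetc t).integrableOn_compact (isCompact_closedBall 0 1)).mono_set ball_subset_closedBall
  have key : ∀ t : ℝ, 0 ≤ t → t < 1 → t * C < 1 →
      ∫ x in ball (0:(EN n)) 1, (ContinuousLinearMap.id ℝ (EN n) + t • A x).det = volume.real (ball (0:(EN n)) 1) := by
    intro t ht0 ht1 htC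
    let G : (EN n) → (EN n) := fun x => x + t • (f x - x)
    have hGd : ∀ x ∈ closedBall (0:(EN n)) 1, HasFDerivAt G (ContinuousLinearMap.id ℝ (EN n) + t • A x) x :=
      fun x hx => (hasFDerivAt_id x).add ((hgd x hx).const_smul t)
    have hGinj : Set.InjOn G (closedBall 0 1) := by
      intro x hx y hy hxy
      have e : y - x = - (t • ((f y - y) - (f x - x))) := by
        simp only [G] at hxy
        rw [smul_sub, neg_sub]
        rw [← sub_eq_zero] at hxy ⊢
        rw [← neg_eq_zero, ← hxy]; abel
      have h2 : ‖y - x‖ ≤ t * (C * ‖y - x‖) := by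
        conv_lhs => rw [e, norm_neg, norm_smul, Real.norm_of_nonneg ht0]
        exact mul_le_mul_of_nonneg_left (hlip x hx y hy) ht0
      have h3 : ‖y - x‖ = 0 := by
        nlinarith [norm_nonneg (y - x)]
      exact (sub_eq_zero.1 (norm_eq_zero.1 h3)).symm
    have hVB : G '' ball 0 1 ⊆ ball 0 1 := by
      rintro _ ⟨x, hx, rfl⟩
      have hx' : ‖x‖ < 1 := by simpa using hx
      have : G x = (1 - t) • x + t • f x := by simp only [G]; module
      rw [mem_ball_zero_iff, this]
      refine (norm_add_le _ _).trans_lt ?_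
      rw [norm_smul, norm_smul, h1 x hx'.le, Real.norm_of_nonneg ht0, Real.norm_of_nonneg (by linarith)]
      nlinarith
    have hopen : IsOpen (G '' ball 0 1) := by
      rw [isOpen_iff_mem_nhds]
      rintro _ ⟨x, hx, rfl⟩
      have hx' := ball_subset_closedBall hx
      have hs : HasStrictFDerivAt G (ContinuousLinearMap.id ℝ (EN n) + t • A x) x := by
        have hcd : ContDiffAt ℝ 1 G x := 
          contDiffAt_id.add (((hf x (by simpa using hx')).sub contDiffAt_id).const_smul t)
        exact hcd.hasStrictFDerivAt' (hGd x hx') (by norm_num)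
      have hne := det_ne_zero_aux (A x) (hC x hx') ht0 htC
      have hsurj : (↑(ContinuousLinearMap.id ℝ (EN n) + t • A x) : (EN n) →ₗ[ℝ] (EN n)).range = ⊤ := by
        by_contra hr
        exact (absurd (range_top_aux _ hne) hr)
      rw [← hs.map_nhds_eq_of_surj hsurj]
      exact Filter.image_mem_map (isOpen_ball.mem_nhds hx)
    have hGc : ContinuousOn G (closedBall 0 1) := fun x hx => (hGd x hx).continuousAt.continuousWithinAt
    have hKcl : IsClosed (G '' closedBall 0 1) := ((isCompact_closedBall (0:(EN n)) 1).image_of_continuousOn hGc).isClosed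
    have hBV : ball 0 1 ⊆ G '' ball 0 1 := by
      refine IsPreconnected.subset_left_of_subset_union hopen hKcl.isOpen_compl ?_ ?_ ?_ (convex_ball (0:(EN n)) 1).isPreconnected
      · rw [Set.disjoint_compl_right_iff_subset]
        exact Set.image_mono ball_subset_closedBall
      · intro y hy
        by_cases hyK : y ∈ G '' closedBall 0 1
        · left
          obtain ⟨x, hx, rfl⟩ := hyK
          refine ⟨x, ?_, rfl⟩
          have hx1 : ‖x‖ ≤ 1 := by simpa using hx
          rcases hx1.lt_or_eq with h | h
          · simpa using h
          · exfalso
            have : G x = x := by simp [G, hid x h]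
            rw [this] at hy
            simp [h] at hy
        · right; exact hyK
      · exact ⟨G 0, hVB ⟨0, by simp, rfl⟩, ⟨0, by simp, rfl⟩⟩
    have himg : G '' ball 0 1 = ball 0 1 := hVB.antisymm hBV
    have hcv := integral_image_eq_integral_abs_det_fderiv_smul (volume : Measure (EN n)) (s := ball 0 1)
      (f := G) (f' := fun x => ContinuousLinearMap.id ℝ (EN n) + t • A x) measurableSet_ball
      (fun x hx => (hGd x (ball_subset_closedBall hx)).hasFDerivWithinAt) 
      (hGinj.mono ball_subset_closedBall) (fun _ => (1:ℝ))
    rw [himg] at hcv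
    simp only [smul_eq_mul, mul_one, integral_const, measureReal_restrict_apply_univ] at hcv
    rw [hcv]
    refine setIntegral_congr_fun measurableSet_ball fun x hx => ?_
    exact (abs_of_pos (det_pos_aux (A x) (hC x (ball_subset_closedBall hx)) ht0 htC)).symm
  -- interpolation
  let s : Finset ℕ := Finset.range (n+1)
  let v : ℕ → ℝ := fun j => (j:ℝ) / ((n + 1) * (C + 1))
  have hpos : (0:ℝ) < (n + 1) * (C + 1) := by positivity
  have hv : Set.InjOn v s := by
    intro i _ j _ hij
    simp only [v] at hij
    exact_mod_cast (div_left_inj' hpos.ne').1 hij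
  let w : ℕ → ℝ := fun j => (Lagrange.basis s v j).eval 1
  have hw : ∑ j ∈ s, w j = 1 := by
    have := congrArg (Polynomial.eval 1) (Lagrange.sum_basis hv (s := s) ⟨0, by simp [s]⟩)
    simpa [Polynomial.eval_finsetSum] using this
  have hpt : ∀ x : (EN n), (ContinuousLinearMap.id ℝ (EN n) + (1:ℝ) • A x).det =
      ∑ j ∈ s, w j * (ContinuousLinearMap.id ℝ (EN n) + v j • A x).det := by
    intro x
    obtain ⟨p, hp, hpe⟩ := det_poly (A x)
    have hdeg : p.degree < (s.card : WithBot ℕ) := by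
      refine Polynomial.degree_le_natDegree.trans_lt ?_
      simp only [s, Finset.card_range]
      exact_mod_cast Nat.lt_succ_of_le hp
    have := congrArg (Polynomial.eval 1) (Lagrange.eq_interpolate hv hdeg)
    rw [Lagrange.interpolate_apply, Polynomial.eval_finsetSum, hpe] at this
    rw [this]
    refine Finset.sum_congr rfl fun j _ => ?_
    rw [Polynomial.eval_mul, Polynomial.eval_C, hpe, mul_comm]
  have htot : ∫ x in ball (0:(EN n)) 1, (ContinuousLinearMap.id ℝ (EN n) + (1:ℝ) • A x).det = volume.real (ball (0:(EN n)) 1) := by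
    simp_rw [hpt]
    rw [integral_finsetSum _ (fun j _ => (hint (v j)).const_mul (w j))]
    have : ∀ j ∈ s, ∫ x in ball (0:(EN n)) 1, w j * (ContinuousLinearMap.id ℝ (EN n) + v j • A x).det 
        = w j * volume.real (ball (0:(EN n)) 1) := by
      intro j hj
      have hj' : (j:ℝ) < n + 1 := by
        have := Finset.mem_range.1 hj
        exact_mod_cast this
      have hvj : 0 ≤ v j := by positivity
      have hvC : v j * (C + 1) < 1 := by
        simp only [v]
        rw [div_mul_eq_mul_div, div_lt_one hpos]
        gcongr
      rw [integral_const_mul, key (v j) hvj (by nlinarith) (by nlinarith)]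
    rw [Finset.sum_congr rfl this, ← Finset.sum_mul, hw, one_mul]
  have hzero : ∀ x ∈ ball (0:(EN n)) 1, (ContinuousLinearMap.id ℝ (EN n) + (1:ℝ) • A x).det = 0 := by
    intro x hx
    have e : ContinuousLinearMap.id ℝ (EN n) + (1:ℝ) • A x = fderiv ℝ f x := by simp [A]
    rw [e]
    by_contra hne
    have hsurj : (↑(fderiv ℝ f x) : (EN n) →ₗ[ℝ] (EN n)).range = ⊤ := by
      by_contra hr
      exact (absurd (range_top_aux _ hne) hr)
    obtain ⟨u, hu⟩ := LinearMap.range_eq_top.1 hsurj (f x)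
    have hd := hfd x (ball_subset_closedBall hx)
    have hd2 := hd.norm_sq
    have hconst : (fun y => ‖f y‖ ^ 2) =ᶠ[nhds x] fun _ => (1:ℝ) := by
      filter_upwards [isOpen_ball.mem_nhds hx] with y hy
      rw [h1 y (by simpa using (ball_subset_closedBall hy))]; norm_num
    have hd3 := (hasFDerivAt_const (𝕜 := ℝ) (1:ℝ) x).congr_of_eventuallyEq hconst
    have := congrArg (fun B : (EN n) →L[ℝ] ℝ => B u) (hd2.unique hd3)
    have hu' : fderiv ℝ f x u = f x := hu
    simp [hu', h1 x (by simpa using (ball_subset_closedBall hx))] at this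
  rw [setIntegral_congr_fun measurableSet_ball hzero] at htot
  simp only [integral_zero] at htot
  have : 0 < volume.real (ball (0:(EN n)) 1) := by
    rw [measureReal_def]
    exact ENNReal.toReal_pos (measure_ball_pos _ _ one_pos).ne' measure_ball_lt_top.ne
  linarith

theorem brouwer_smooth {n : ℕ} (g : EN n → EN n) (hg : ContDiff ℝ 1 g)
    (hb : ∀ x, ‖x‖ ≤ 1 → ‖g x‖ ≤ 1) : ∃ x, ‖x‖ ≤ 1 ∧ g x = x := by
  by_contra hno
  push Not at hno
  let u : EN n → EN n := fun x => x - g x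
  have hu : ContDiff ℝ 1 u := contDiff_id.sub hg
  have hu0 : ∀ x, ‖x‖ ≤ 1 → 0 < ‖u x‖ ^ 2 := fun x hx => by
    have : u x ≠ 0 := fun h => hno x hx (sub_eq_zero.1 h).symm
    positivity
  let D : EN n → ℝ := fun x => ⟪x, u x⟫ ^ 2 + ‖u x‖ ^ 2 * (1 - ‖x‖ ^ 2)
  have hDc : ContDiff ℝ 1 D :=
    ((contDiff_id.inner ℝ hu).pow 2).add ((hu.norm_sq ℝ).mul (contDiff_const.sub (contDiff_id.norm_sq ℝ)))
  have hip : ∀ x, ‖x‖ = 1 → 0 < ⟪x, u x⟫ := by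
    intro x hx
    have e1 : ⟪x, u x⟫ = 1 - ⟪x, g x⟫ := by
      simp only [u, inner_sub_right, real_inner_self_eq_norm_sq, hx]; norm_num
    have e2 : ‖u x‖ ^ 2 = ‖x‖ ^ 2 - 2 * ⟪x, g x⟫ + ‖g x‖ ^ 2 := norm_sub_sq_real _ _
    have := hu0 x hx.le
    have h3 := hb x hx.le
    rw [e1]
    rw [hx] at e2
    nlinarith [norm_nonneg (g x)]
  have hD : ∀ x, ‖x‖ ≤ 1 → 0 < D x := by
    intro x hx
    rcases hx.lt_or_eq with h | h
    · have h2 : 0 < 1 - ‖x‖ ^ 2 := by nlinarith [norm_nonneg x]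
      have := mul_pos (hu0 x hx) h2
      simp only [D]
      positivity
    · have := hip x h
      simp only [D, h]
      ring_nf
      positivity
  let lam : EN n → ℝ := fun x => (- ⟪x, u x⟫ + √(D x)) / ‖u x‖ ^ 2
  refine no_retraction (fun x => x + lam x • u x) ?_ ?_ ?_
  · intro x hx
    have hl : ContDiffAt ℝ 1 lam x := by
      refine ContDiffAt.div (ContDiffAt.add ?_ ?_) (hu.norm_sq ℝ).contDiffAt (hu0 x hx).ne'
      · exact (contDiff_id.inner ℝ hu).neg.contDiffAt
      · exact hDc.contDiffAt.sqrt (hD x hx).ne'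
    exact contDiffAt_id.add (hl.smul hu.contDiffAt)
  · intro x hx
    have h0 := hu0 x hx
    have e : ‖x + lam x • u x‖ ^ 2 = ‖x‖ ^ 2 + 2 * lam x * ⟪x, u x⟫ + lam x ^ 2 * ‖u x‖ ^ 2 := by
      rw [norm_add_sq_real, real_inner_smul_right, norm_smul, mul_pow, Real.norm_eq_abs, sq_abs]; ring
    have hs := Real.sq_sqrt (hD x hx).le
    have hl : lam x * ‖u x‖ ^ 2 = - ⟪x, u x⟫ + √(D x) := by
      exact div_mul_cancel₀ _ h0.ne'
    have hDx : D x = ⟪x, u x⟫ ^ 2 + ‖u x‖ ^ 2 * (1 - ‖x‖ ^ 2) := rfl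
    have : ‖u x‖ ^ 2 * (‖x + lam x • u x‖ ^ 2 - 1) = 0 := by
      rw [e]
      have h5 : (lam x * ‖u x‖ ^ 2 + ⟪x, u x⟫) ^ 2 = D x := by
        rw [hl]; linear_combination hs
      rw [hDx] at h5
      linear_combination h5
    have h6 : ‖x + lam x • u x‖ ^ 2 = 1 := by
      rcases mul_eq_zero.1 this with h | h
      · exact absurd h h0.ne'
      · linarith
    exact (pow_eq_one_iff_of_nonneg (norm_nonneg _) two_ne_zero).1 h6
  · intro x hx
    have : lam x = 0 := by
      have : D x = ⟪x, u x⟫ ^ 2 := by simp only [D, hx]; ring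
      simp only [lam, this, Real.sqrt_sq (hip x hx).le]
      simp
    simp [this]

theorem brouwer {n : ℕ} (f : EN n → EN n) (hf : Continuous f) (hb : ∀ x, ‖f x‖ ≤ 1) :
    ∃ x, f x = x := by
  by_contra hno
  push Not at hno
  obtain ⟨z, hz, hzmin⟩ := (isCompact_closedBall (0 : EN n) 1).exists_isMinOn ⟨0, by simp⟩
    (f := fun x => ‖f x - x‖) (by fun_prop)
  have hpos : 0 < ‖f z - z‖ := norm_pos_iff.2 (sub_ne_zero.2 (hno z))
  set ε := ‖f z - z‖ / 2 with hε
  have hε0 : 0 < ε := by positivity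
  obtain ⟨g, hg, hgf, -⟩ := hf.exists_contDiff_approx 1 (ε := fun _ => ε) continuous_const (fun _ => hε0)
  have hgn : ∀ x, ‖g x‖ ≤ 1 + ε := by
    intro x
    have h1 := hgf x
    rw [dist_eq_norm] at h1
    have : ‖g x‖ ≤ ‖f x‖ + ‖g x - f x‖ := by
      simpa using norm_add_le (f x) (g x - f x)
    linarith [hb x]
  have h1e : (0:ℝ) < 1 + ε := by positivity
  obtain ⟨x, hx, hxf⟩ := brouwer_smooth (fun x => (1 + ε)⁻¹ • g x) (hg.const_smul (1 + ε)⁻¹) (by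
    intro x _
    rw [norm_smul, Real.norm_of_nonneg (by positivity), inv_mul_le_iff₀ h1e]
    simpa using hgn x)
  have hgx : g x = (1 + ε) • x := by
    conv_rhs => rw [← hxf]
    exact (smul_inv_smul₀ h1e.ne' _).symm
  have h2 := hgf x
  rw [dist_eq_norm] at h2
  have h3 : ‖f z - z‖ ≤ ‖f x - x‖ := hzmin (by simpa using hx)
  have e : f x - x = ε • x - (g x - f x) := by rw [hgx]; module
  have h4 : ‖f x - x‖ ≤ ε * ‖x‖ + ‖g x - f x‖ := by
    rw [e]
    refine (norm_sub_le _ _).trans ?_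
    rw [norm_smul, Real.norm_of_nonneg hε0.le]
  nlinarith

theorem field_zero {n : ℕ} (h : EN n → EN n) (hc : Continuous h) (R : ℝ) (hR : 0 < R)
    (hs : ∀ x, ‖x‖ = R → 0 ≤ ⟪h x, x⟫) : ∃ x, h x = 0 := by
  have hmax : ∀ y : EN n, 0 < max 1 ‖y‖ := fun y => lt_of_lt_of_le one_pos (le_max_left _ _)
  obtain ⟨x, hx⟩ := brouwer (fun x => (max 1 ‖x - h (R • x)‖)⁻¹ • (x - h (R • x))) (by
    have : Continuous fun x => x - h (R • x) := by fun_prop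
    exact ((continuous_const.max this.norm).inv₀ fun y => (hmax _).ne').smul this) (by
    intro x
    rw [norm_smul, norm_inv, Real.norm_of_nonneg (hmax _).le, inv_mul_le_iff₀ (hmax _), mul_one]
    exact le_max_right _ _)
  refine ⟨R • x, ?_⟩
  set y := x - h (R • x) with hy
  rcases le_or_gt ‖y‖ 1 with h1 | h1
  · simp only [max_eq_left h1, inv_one, one_smul] at hx
    have : h (R • x) = x - y := by rw [hy]; abel
    rw [this, hx, sub_self]
  · exfalso
    simp only [max_eq_right h1.le] at hx
    have hy0 : ‖y‖ ≠ 0 := by positivity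
    have hyx : y = ‖y‖ • x := by rw [← hx, smul_inv_smul₀ hy0]
    have hxn : ‖x‖ = 1 := by
      rw [← hx, norm_smul, norm_inv, norm_norm, inv_mul_cancel₀ hy0]
    have hh : h (R • x) = (1 - ‖y‖) • x := by
      have : h (R • x) = x - y := by rw [hy]; abel
      rw [this, sub_smul, one_smul, ← hyx]
    have := hs (R • x) (by rw [norm_smul, hxn, Real.norm_of_nonneg hR.le, mul_one])
    rw [hh, real_inner_smul_left, real_inner_smul_right, real_inner_self_eq_norm_sq, hxn] at this
    nlinarith

theorem grad_mono {n : ℕ} (l : EN n → ℝ) (μ : ℝ) (hd : Differentiable ℝ l)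
    (hsc : ConvexOn ℝ Set.univ (fun x => l x - μ / 2 * ‖x‖ ^ 2)) (a : EN n)
    (ha : gradient l a = 0) (x : EN n) : μ * ‖x - a‖ ^ 2 ≤ ⟪gradient l x, x - a⟫ := by
  let v := x - a
  let ψ : ℝ → ℝ := fun s => l (a + s • v) - μ / 2 * ‖a + s • v‖ ^ 2
  have hψ : ConvexOn ℝ Set.univ ψ := by
    refine ⟨convex_univ, fun s _ t _ p q hp hq hpq => ?_⟩
    have := hsc.2 (Set.mem_univ (a + s • v)) (Set.mem_univ (a + t • v)) hp hq hpq
    have e : p • (a + s • v) + q • (a + t • v) = a + (p • s + q • t) • v := by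
      have : a = (p + q) • a := by rw [hpq, one_smul]
      conv_rhs => rw [this]
      simp only [smul_eq_mul]
      module
    simp only [e] at this
    exact this
  have hline : ∀ s : ℝ, HasDerivAt (fun s : ℝ => a + s • v) v s := fun s => by
    simpa using ((hasDerivAt_id s).smul_const v).const_add a
  have hder : ∀ s : ℝ, HasDerivAt ψ (⟪gradient l (a + s • v), v⟫ - μ / 2 * (2 * ⟪a + s • v, v⟫)) s := by
    intro s
    have h1 := (hd (a + s • v)).hasGradientAt.hasFDerivAt.comp_hasDerivAt s (hline s)
    have h2 := ((hline s).norm_sq).const_mul (μ / 2)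
    have h3 := h1.sub h2
    refine HasDerivAt.congr_deriv h3 ?_
    simp
  have hm := hψ.monotoneOn_deriv (fun s _ => (hder s).differentiableAt) (Set.mem_univ 0) (Set.mem_univ 1) zero_le_one
  rw [(hder 0).deriv, (hder 1).deriv] at hm
  have e1 : a + (1:ℝ) • v = x := by simp [v]
  have e3 : ⟪x, v⟫ - ⟪a, v⟫ = ‖v‖ ^ 2 := by
    rw [← inner_sub_left, real_inner_self_eq_norm_sq]
  rw [e1] at hm
  simp only [zero_smul, add_zero, ha, inner_zero_left] at hm
  show μ * ‖v‖ ^ 2 ≤ ⟪gradient l x, v⟫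
  rw [← e3]
  linarith

theorem d_props {n : ℕ} (l : EN n → ℝ) (μ L : ℝ) (hμ : 0 < μ) (hd : Differentiable ℝ l)
    (hsc : ConvexOn ℝ Set.univ (fun x => l x - μ / 2 * ‖x‖ ^ 2))
    (hsm : ∀ x y, ‖gradient l x - gradient l y‖ ≤ L * ‖x - y‖) (a : EN n)
    (ha : gradient l a = 0) :
    Continuous (fun x => (‖x - a‖ / ‖gradient l x‖) • gradient l x) ∧
    ∃ c : ℝ, 0 < c ∧ ∀ x, c * ‖x - a‖ ^ 2 ≤ ⟪(‖x - a‖ / ‖gradient l x‖) • gradient l x, x - a⟫ := by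
  have hgc : Continuous (gradient l) := by
    have : LipschitzWith (Real.toNNReal L) (gradient l) := by
      apply LipschitzWith.of_dist_le_mul
      intro x y
      rw [dist_eq_norm, dist_eq_norm]
      refine (hsm x y).trans ?_
      gcongr
      exact Real.le_coe_toNNReal L
    exact this.continuous
  have hmono := grad_mono l μ hd hsc a ha
  have hne : ∀ x, x ≠ a → gradient l x ≠ 0 := by
    intro x hx h0
    have := hmono x
    rw [h0, inner_zero_left] at this
    have h1 : 0 < ‖x - a‖ := norm_pos_iff.2 (sub_ne_zero.2 hx)
    have : 0 < μ * ‖x - a‖ ^ 2 := by positivity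
    linarith
  constructor
  · rw [continuous_iff_continuousAt]
    intro x
    by_cases hx : x = a
    · subst hx
      unfold ContinuousAt
      simp only [sub_self, norm_zero, zero_div, zero_smul]
      have hz : Filter.Tendsto (fun y : EN n => ‖y - x‖) (nhds x) (nhds 0) := by
        have : Continuous fun y : EN n => ‖y - x‖ := by fun_prop
        simpa using this.tendsto x
      refine squeeze_zero_norm (fun y => ?_) hz
      rw [norm_smul, norm_div, norm_norm, norm_norm]
      by_cases h0 : ‖gradient l y‖ = 0
      · simp [h0]
      · rw [div_mul_cancel₀ _ h0]
    · have h1 : ‖gradient l x‖ ≠ 0 := norm_ne_zero_iff.2 (hne x hx)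
      have h2 : ContinuousAt (fun y : EN n => ‖y - a‖) x := by fun_prop
      exact (h2.div hgc.norm.continuousAt h1).smul hgc.continuousAt
  · refine ⟨μ / (|L| + 1), by positivity, fun x => ?_⟩
    by_cases hx : x = a
    · simp [hx]
    have hv : 0 < ‖x - a‖ := norm_pos_iff.2 (sub_ne_zero.2 hx)
    have hg : 0 < ‖gradient l x‖ := norm_pos_iff.2 (hne x hx)
    have hgl : ‖gradient l x‖ ≤ (|L| + 1) * ‖x - a‖ := by
      have := hsm x a
      rw [ha, sub_zero] at this
      refine this.trans ?_
      gcongr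
      linarith [le_abs_self L]
    rw [real_inner_smul_left]
    calc μ / (|L| + 1) * ‖x - a‖ ^ 2 = (1 / (|L| + 1)) * (μ * ‖x - a‖ ^ 2) := by ring
      _ ≤ (‖x - a‖ / ‖gradient l x‖) * (μ * ‖x - a‖ ^ 2) := by
        apply mul_le_mul_of_nonneg_right _ (by positivity)
        rw [div_le_div_iff₀ (by positivity) hg]
        linarith
      _ ≤ _ := by
        apply mul_le_mul_of_nonneg_left (hmono x) (by positivity)

theorem dibs_fixed_point_exists {n N : ℕ} (hN : 0 < N)
    (ℓ : Fin N → EuclideanSpace ℝ (Fin n) → ℝ) (μ L : Fin N → ℝ)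
    (hμ : ∀ i, 0 < μ i)
    (hdiff : ∀ i, Differentiable ℝ (ℓ i))
    (hsc : ∀ i, ConvexOn ℝ Set.univ (fun x => ℓ i x - μ i / 2 * ‖x‖ ^ 2))
    (hsmooth : ∀ i, ∀ x y, ‖gradient (ℓ i) x - gradient (ℓ i) y‖ ≤ L i * ‖x - y‖)
    (xstar : Fin N → EuclideanSpace ℝ (Fin n))
    (hmin : ∀ i, ∀ y, ℓ i (xstar i) ≤ ℓ i y) :
    ∃ xdag : EuclideanSpace ℝ (Fin n),
      dibsField ℓ xstar xdag = 0 ∧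
      ParetoStationary ℓ xdag ∧
      ∀ α : ℝ, 0 < α → xdag - α • dibsField ℓ xstar xdag = xdag := by
  have hg0 : ∀ i, gradient (ℓ i) (xstar i) = 0 := by
    intro i
    have : IsLocalMin (ℓ i) (xstar i) := Filter.Eventually.of_forall (hmin i)
    simp [gradient, this.fderiv_eq_zero]
  have hfield : ∀ x, dibsField ℓ xstar x =
      ∑ i, (‖x - xstar i‖ / ‖gradient (ℓ i) x‖) • gradient (ℓ i) x := by
    intro x
    unfold dibsField
    refine Finset.sum_congr rfl fun i _ => ?_
    split_ifs with h
    · rfl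
    · push Not at h
      simp [h]
  have hp := fun i => d_props (ℓ i) (μ i) (L i) (hμ i) (hdiff i) (hsc i) (hsmooth i) (xstar i) (hg0 i)
  choose hcont c hc hcip using hp
  have hcF : Continuous (dibsField ℓ xstar) := by
    rw [funext hfield]
    exact continuous_finsetSum _ fun i _ => hcont i
  let r : Fin N → ℝ := fun i => ‖xstar i‖ + ‖xstar i‖ / c i
  have hr : ∀ i, 0 ≤ r i := fun i => by have := hc i; positivity
  obtain ⟨x, hx⟩ := field_zero (dibsField ℓ xstar) hcF (1 + ∑ i, r i)
    (by have := Finset.sum_nonneg fun i (_ : i ∈ Finset.univ) => hr i; linarith) (by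
    intro x hxR
    rw [hfield, sum_inner]
    refine Finset.sum_nonneg fun i _ => ?_
    have hri : r i ≤ ‖x‖ := by
      have := Finset.single_le_sum (fun i _ => hr i) (Finset.mem_univ i)
      rw [hxR]; linarith
    have h1 : ‖x‖ ≤ ‖x - xstar i‖ + ‖xstar i‖ := by
      simpa using norm_add_le (x - xstar i) (xstar i)
    have h2 : ‖xstar i‖ / c i ≤ ‖x - xstar i‖ := by
      simp only [r] at hri; linarith
    rw [div_le_iff₀ (hc i)] at h2
    set d := (‖x - xstar i‖ / ‖gradient (ℓ i) x‖) • gradient (ℓ i) x with hd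
    have hdn : ‖d‖ ≤ ‖x - xstar i‖ := by
      rw [hd, norm_smul, norm_div, norm_norm, norm_norm]
      by_cases h0 : ‖gradient (ℓ i) x‖ = 0
      · simp [h0]
      · rw [div_mul_cancel₀ _ h0]
    have e : ⟪d, x⟫ = ⟪d, x - xstar i⟫ + ⟪d, xstar i⟫ := by
      rw [← inner_add_right, sub_add_cancel]
    have h3 := hcip i x
    rw [← hd] at h3
    have h4 : |⟪d, xstar i⟫| ≤ ‖x - xstar i‖ * ‖xstar i‖ :=
      (abs_real_inner_le_norm _ _).trans (by gcongr)
    have h5 := (abs_le.1 h4).1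
    rw [e]
    nlinarith [norm_nonneg (x - xstar i)])
  refine ⟨x, hx, ?_, fun α _ => by simp [hx]⟩
  by_cases hex : ∃ i, gradient (ℓ i) x = 0
  · obtain ⟨i, hi⟩ := hex
    refine ⟨fun j => if j = i then 1 else 0, fun j => by dsimp only; split_ifs <;> norm_num, by simp, ?_⟩
    simp [hi]
  · push Not at hex
    let w : Fin N → ℝ := fun i => ‖x - xstar i‖ / ‖gradient (ℓ i) x‖
    have hw : ∀ i, 0 < w i := by
      intro i
      have h1 : x ≠ xstar i := fun h => hex i (by rw [h]; exact hg0 i)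
      exact div_pos (norm_pos_iff.2 (sub_ne_zero.2 h1)) (norm_pos_iff.2 (hex i))
    have hS : 0 < ∑ i, w i :=
      Finset.sum_pos (fun i _ => hw i) ⟨⟨0, hN⟩, Finset.mem_univ _⟩
    refine ⟨fun i => (∑ i, w i)⁻¹ * w i, fun i => mul_nonneg (inv_nonneg.2 hS.le) (hw i).le, ?_, ?_⟩
    · rw [← Finset.mul_sum, inv_mul_cancel₀ hS.ne']
    · simp only [mul_smul]
      rw [← Finset.smul_sum]
      rw [hfield] at hx
      simp only [w] at hx ⊢
      rw [hx, smul_zero]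
end
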